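/- arXiv:2109.11748 — 4 statements merged into one kernel-verified Lean document; each statement's English description precedes it below -/
import Mathlib

section
/- Let Ξ = {ξ ∈ ℝ^K : Uξ ≤ t} be nonempty and bounded, where U ∈ ℝ^{W×K} and t ∈ ℝ^W. Let α ∈ ℝ, β ∈ ℝ^K, μ ∈ ℝ^K, κ ∈ ℝ^K with κ ≥ 0, and c ∈ ℝ. Then α + β^T ξ − Σ_k κ_k |ξ_k − μ_k| ≤ c for all ξ ∈ Ξ if and only if there exist π ∈ ℝ^K, τ ∈ ℝ^K, ψ ∈ ℝ^W, all componentwise nonnegative, such that π + τ = κ, β + τ = π + U^T ψ, and α + (π − τ)^T μ + ψ^T t ≤ c. -/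
open Matrix

/-- Farkas' lemma for finitely many linear functionals (Bartl's inductive proof). -/
theorem farkas_functionals {ι V : Type*} [DecidableEq ι] [AddCommGroup V] [Module ℝ V]
    (s : Finset ι) : ∀ (A : ι → V →ₗ[ℝ] ℝ) (b : V →ₗ[ℝ] ℝ),
    (∀ x, (∀ i ∈ s, A i x ≤ 0) → b x ≤ 0) →
    ∃ y : ι → ℝ, (∀ i, 0 ≤ y i) ∧ ∀ x, b x = ∑ i ∈ s, y i * A i x := by
  induction s using Finset.induction_on with
  | empty =>
    intro A b h
    refine ⟨0, fun _ => le_rfl, fun x => ?_⟩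
    have h1 := h x (by simp)
    have h2 := h (-x) (by simp)
    rw [map_neg] at h2
    simp
    linarith
  | insert a s ha ih =>
    intro A b h
    by_cases hs : ∀ x, (∀ i ∈ s, A i x ≤ 0) → b x ≤ 0
    · obtain ⟨y, hy, hb⟩ := ih A b hs
      refine ⟨Function.update y a 0, fun i => ?_, fun x => ?_⟩
      · by_cases hi : i = a
        · subst hi; simp
        · simp [hi, hy i]
      · rw [Finset.sum_insert ha, hb x]
        simp only [Function.update_self, zero_mul, zero_add]
        refine Finset.sum_congr rfl fun i hi => ?_
        have : i ≠ a := fun e => ha (e ▸ hi)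
        simp [this]
    · push Not at hs
      obtain ⟨z, hz, hbz⟩ := hs
      have haz : 0 < A a z := by
        by_contra hn
        push Not at hn
        have := h z (by
          intro i hi
          rcases Finset.mem_insert.1 hi with rfl | hi
          · exact hn
          · exact hz i hi)
        linarith
      obtain ⟨y, hy, hb⟩ := ih (fun i => A i - (A i z / A a z) • A a)
        (b - (b z / A a z) • A a) (by
          intro x hx
          have := h (x - (A a x / A a z) • z) (by
            intro i hi
            rcases Finset.mem_insert.1 hi with rfl | hi
            · simp [haz.ne']
            · have := hx i hi
              simp at this ⊢
              calc A i x ≤ A i z / A a z * A a x := this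
                _ = _ := by ring)
          simp at this ⊢
          calc b x ≤ _ := this
            _ = _ := by ring)
      have hnn : 0 ≤ b z / A a z - ∑ i ∈ s, y i * (A i z / A a z) := by
        have h1 : ∑ i ∈ s, y i * (A i z / A a z) ≤ 0 :=
          Finset.sum_nonpos fun i hi =>
            mul_nonpos_of_nonneg_of_nonpos (hy i)
              (div_nonpos_of_nonpos_of_nonneg (hz i hi) haz.le)
        have h2 : 0 ≤ b z / A a z := (div_pos hbz haz).le
        linarith
      refine ⟨Function.update y a (b z / A a z - ∑ i ∈ s, y i * (A i z / A a z)),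
        fun i => ?_, fun x => ?_⟩
      · by_cases hi : i = a
        · subst hi; simpa using hnn
        · simp [hi, hy i]
      · rw [Finset.sum_insert ha]
        have e : ∑ i ∈ s, Function.update y a
            (b z / A a z - ∑ i ∈ s, y i * (A i z / A a z)) i * A i x
            = ∑ i ∈ s, y i * A i x := by
          refine Finset.sum_congr rfl fun i hi => ?_
          have : i ≠ a := fun e => ha (e ▸ hi)
          simp [this]
        rw [e, Function.update_self]
        have hbx := hb x
        simp only [LinearMap.sub_apply, LinearMap.smul_apply, smul_eq_mul] at hbx
        have e2 : ∑ i ∈ s, y i * (A i x - A i z / A a z * A a x)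
            = ∑ i ∈ s, y i * A i x - (∑ i ∈ s, y i * (A i z / A a z)) * A a x := by
          rw [Finset.sum_mul, ← Finset.sum_sub_distrib]
          exact Finset.sum_congr rfl fun i _ => by ring
        rw [e2] at hbx
        linarith

/-- A linear functional on `(ξ, ρ, s)`. -/
def triFun {K : ℕ} (p q : Fin K → ℝ) (r : ℝ) :
    ((Fin K → ℝ) × (Fin K → ℝ) × ℝ) →ₗ[ℝ] ℝ where
  toFun x := p ⬝ᵥ x.1 + q ⬝ᵥ x.2.1 + r * x.2.2
  map_add' x y := by simp [dotProduct_add]; ring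
  map_smul' a x := by simp [dotProduct_smul]; ring

theorem triFun_apply {K : ℕ} (p q : Fin K → ℝ) (r : ℝ) (x : (Fin K → ℝ) × (Fin K → ℝ) × ℝ) :
    triFun p q r x = p ⬝ᵥ x.1 + q ⬝ᵥ x.2.1 + r * x.2.2 := rfl

/-- **Dualization of the first semi-infinite mean-MAD dual constraint.** Over a
nonempty bounded polyhedron `Ξ = {ξ : U ξ ≤ t}`, the robust constraint
`α + βᵀξ − Σ_k κ_k |ξ_k − μ_k| ≤ c` for all `ξ ∈ Ξ` (with `κ ≥ 0`) is
equivalent to feasibility of the finite linear system in nonnegative dual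
multipliers `π, τ, ψ`. -/
theorem meanMAD_first_constraint_dualization
    {K W : ℕ}
    (U : Matrix (Fin W) (Fin K) ℝ) (t : Fin W → ℝ)
    (hne : ∃ ξ : Fin K → ℝ, U.mulVec ξ ≤ t)
    (hbd : Bornology.IsBounded {ξ : Fin K → ℝ | U.mulVec ξ ≤ t})
    (α : ℝ) (β μ κ : Fin K → ℝ) (hκ : 0 ≤ κ) (c : ℝ) :
    (∀ ξ : Fin K → ℝ, U.mulVec ξ ≤ t →
        α + β ⬝ᵥ ξ - (∑ k, κ k * |ξ k - μ k|) ≤ c)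
      ↔ ∃ (π τ : Fin K → ℝ) (ψ : Fin W → ℝ),
          0 ≤ π ∧ 0 ≤ τ ∧ 0 ≤ ψ ∧
          π + τ = κ ∧
          β + τ = π + U.transpose.mulVec ψ ∧
          α + (π - τ) ⬝ᵥ μ + ψ ⬝ᵥ t ≤ c := by
  constructor
  · intro h
    -- recession directions vanish
    have hrec : ∀ ξ : Fin K → ℝ, U.mulVec ξ ≤ 0 → ξ = 0 := by
      intro ξ hξ
      obtain ⟨ξ₀, h₀⟩ := hne
      obtain ⟨C, hC⟩ := hbd.exists_norm_le
      by_contra hn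
      have hpos : 0 < ‖ξ‖ := norm_pos_iff.2 hn
      have hC0 : 0 ≤ C := (norm_nonneg _).trans (hC ξ₀ h₀)
      have hr : 0 ≤ (2 * C + 1) / ‖ξ‖ := by positivity
      have h1 := hC (ξ₀ + ((2 * C + 1) / ‖ξ‖) • ξ) (by
        intro w
        have a1 := h₀ w
        have a2 := mul_nonpos_of_nonneg_of_nonpos hr (hξ w)
        simp only [mulVec_add, mulVec_smul, Pi.add_apply, Pi.smul_apply, smul_eq_mul]
        linarith)
      have h2 : ‖((2 * C + 1) / ‖ξ‖) • ξ‖ = 2 * C + 1 := by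
        rw [norm_smul, Real.norm_of_nonneg hr]
        field_simp
      have h3 := norm_sub_le (ξ₀ + ((2 * C + 1) / ‖ξ‖) • ξ) ξ₀
      rw [add_sub_cancel_left, h2] at h3
      have h4 := hC ξ₀ h₀
      linarith
    obtain ⟨y, hy, hb⟩ := farkas_functionals
      (Finset.univ : Finset (Fin W ⊕ Fin K ⊕ Fin K ⊕ Unit))
      (Sum.elim (fun w => triFun (U w) 0 (-t w))
        (Sum.elim (fun k => triFun (Pi.single k 1) (-Pi.single k 1) (-μ k))
          (Sum.elim (fun k => triFun (-Pi.single k 1) (-Pi.single k 1) (μ k))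
            (fun _ => triFun 0 0 (-1)))))
      (triFun β (-κ) (α - c)) (by
        rintro ⟨ξ, ρ, s⟩ hx
        have hw : ∀ w, U.mulVec ξ w ≤ s * t w := by
          intro w
          have := hx (Sum.inl w) (Finset.mem_univ _)
          simp [triFun_apply] at this
          simp only [mulVec]
          linarith
        have hp : ∀ k, ξ k - s * μ k ≤ ρ k := by
          intro k
          have := hx (Sum.inr (Sum.inl k)) (Finset.mem_univ _)
          simp [triFun_apply] at this
          linarith
        have hm : ∀ k, -(ξ k - s * μ k) ≤ ρ k := by
          intro k
          have := hx (Sum.inr (Sum.inr (Sum.inl k))) (Finset.mem_univ _)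
          simp [triFun_apply] at this
          linarith
        have hs : 0 ≤ s := by
          have := hx (Sum.inr (Sum.inr (Sum.inr ()))) (Finset.mem_univ _)
          simp [triFun_apply] at this
          linarith
        have habs : ∑ k, κ k * |ξ k - s * μ k| ≤ κ ⬝ᵥ ρ :=
          Finset.sum_le_sum fun k _ =>
            mul_le_mul_of_nonneg_left (abs_le'.2 ⟨hp k, hm k⟩) (hκ k)
        simp only [triFun_apply, neg_dotProduct]
        rcases hs.eq_or_lt with rfl | hs
        · have hz : ξ = 0 := hrec ξ (fun w => by simpa using hw w)
          subst hz
          have : 0 ≤ ∑ k, κ k * |(0 : Fin K → ℝ) k - 0 * μ k| :=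
            Finset.sum_nonneg fun k _ => mul_nonneg (hκ k) (abs_nonneg _)
          simp only [dotProduct_zero, mul_zero]
          linarith
        · have h1 := h (s⁻¹ • ξ) (fun w => by
            rw [mulVec_smul, Pi.smul_apply, smul_eq_mul, inv_mul_le_iff₀ hs]
            exact hw w)
          have h2 : s * ∑ k, κ k * |(s⁻¹ • ξ) k - μ k| = ∑ k, κ k * |ξ k - s * μ k| := by
            rw [Finset.mul_sum]
            refine Finset.sum_congr rfl fun k _ => ?_
            have : ξ k - s * μ k = s * ((s⁻¹ • ξ) k - μ k) := by
              simp only [Pi.smul_apply, smul_eq_mul]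
              field_simp
            rw [this, abs_mul, abs_of_pos hs]
            ring
          have h3 := mul_le_mul_of_nonneg_left h1 hs.le
          rw [dotProduct_smul, smul_eq_mul, mul_sub, h2, mul_add, mul_inv_cancel_left₀ hs.ne'] at h3
          linarith)
    refine ⟨fun k => y (Sum.inr (Sum.inl k)), fun k => y (Sum.inr (Sum.inr (Sum.inl k))),
      fun w => y (Sum.inl w), fun _ => hy _, fun _ => hy _, fun _ => hy _, ?_, ?_, ?_⟩
    · funext k
      have := hb (0, Pi.single k 1, 0)
      simp [triFun_apply, Fintype.sum_sum_type, Pi.single_apply] at this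
      simp only [Pi.add_apply]
      linarith
    · funext k
      have := hb (Pi.single k 1, 0, 0)
      simp [triFun_apply, Fintype.sum_sum_type, Pi.single_apply] at this
      have e : (U.transpose.mulVec fun w => y (Sum.inl w)) k = ∑ w, y (Sum.inl w) * U w k := by
        simp [mulVec, dotProduct, mul_comm]
      simp only [Pi.add_apply, e]
      linarith
    · have := hb (0, 0, 1)
      simp [triFun_apply, Fintype.sum_sum_type] at this
      have h0 := hy (Sum.inr (Sum.inr (Sum.inr ())))
      rw [sub_dotProduct]
      simp only [dotProduct]
      linarith
  · rintro ⟨π, τ, ψ, hπ, hτ, hψ, h1, h2, h3⟩ ξ hξ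
    have e1 : β ⬝ᵥ ξ = (π - τ) ⬝ᵥ ξ + ψ ⬝ᵥ U.mulVec ξ := by
      have : β = (π - τ) + U.transpose.mulVec ψ := by
        rw [sub_add_eq_add_sub, ← h2, add_sub_cancel_right]
      rw [this, add_dotProduct, mulVec_transpose, dotProduct_mulVec]
    have e2 : ψ ⬝ᵥ U.mulVec ξ ≤ ψ ⬝ᵥ t :=
      Finset.sum_le_sum fun w _ => mul_le_mul_of_nonneg_left (hξ w) (hψ w)
    have e3 : (π - τ) ⬝ᵥ ξ - (π - τ) ⬝ᵥ μ ≤ ∑ k, κ k * |ξ k - μ k| := by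
      rw [← dotProduct_sub]
      refine Finset.sum_le_sum fun k _ => ?_
      have a1 := mul_le_mul_of_nonneg_left (le_abs_self (ξ k - μ k)) (hπ k)
      have a2 := mul_le_mul_of_nonneg_left (neg_abs_le (ξ k - μ k)) (hτ k)
      rw [← h1]
      simp only [Pi.sub_apply, Pi.add_apply]
      linarith
    linarith
end

section
/- Let U ∈ ℝ^{W×K}, t ∈ ℝ^W, a ∈ ℝ^K, b ∈ ℝ, α ∈ ℝ, β ∈ ℝ^K, μ ∈ ℝ^K, κ ∈ ℝ^K. Suppose there exist π ∈ ℝ^K, τ ∈ ℝ^K, ψ ∈ ℝ^W, all componentwise nonnegative, such that π + τ = κ, β + a + τ = π + U^T ψ, and α + (π − τ)^T μ + ψ^T t ≤ b. Then for every ξ ∈ ℝ^K with Uξ ≤ t and a^T ξ > b, it holds that α + β^T ξ − Σ_k κ_k |ξ_k − μ_k| ≤ 0. -/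
open Matrix

/-- **Weak duality for the second semi-infinite mean-MAD dual constraint.**
If the finite linear system in nonnegative multipliers `π, τ, ψ` (after the
normalization `λ = 1`) is feasible, then for every `ξ` with `U ξ ≤ t` and
`aᵀξ > b` one has `α + βᵀξ − Σ_k κ_k |ξ_k − μ_k| ≤ 0`. -/
theorem meanMAD_second_constraint_weak_duality
    {K W : ℕ}
    (U : Matrix (Fin W) (Fin K) ℝ) (t : Fin W → ℝ)
    (a : Fin K → ℝ) (b : ℝ) (α : ℝ) (β μ κ : Fin K → ℝ)
    (π τ : Fin K → ℝ) (ψ : Fin W → ℝ)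
    (hπ : 0 ≤ π) (hτ : 0 ≤ τ) (hψ : 0 ≤ ψ)
    (h1 : π + τ = κ)
    (h2 : β + a + τ = π + U.transpose.mulVec ψ)
    (h3 : α + (π - τ) ⬝ᵥ μ + ψ ⬝ᵥ t ≤ b) :
    ∀ ξ : Fin K → ℝ, U.mulVec ξ ≤ t → a ⬝ᵥ ξ > b →
      α + β ⬝ᵥ ξ - (∑ k, κ k * |ξ k - μ k|) ≤ 0 := by
  intro ξ hU ha
  have e := congrArg (fun v => v ⬝ᵥ ξ) h2
  simp only [add_dotProduct] at e
  have e2 : U.transpose.mulVec ψ ⬝ᵥ ξ = ψ ⬝ᵥ U.mulVec ξ := by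
    rw [Matrix.mulVec_transpose, Matrix.dotProduct_mulVec]
  have e3 : ψ ⬝ᵥ U.mulVec ξ ≤ ψ ⬝ᵥ t :=
    Finset.sum_le_sum fun i _ => mul_le_mul_of_nonneg_left (hU i) (hψ i)
  have e4 : (π - τ) ⬝ᵥ (ξ - μ) ≤ ∑ k, κ k * |ξ k - μ k| := by
    refine Finset.sum_le_sum fun k _ => ?_
    have p : 0 ≤ π k := hπ k
    have q : 0 ≤ τ k := hτ k
    have r : κ k = π k + τ k := by rw [← h1]; rfl
    have u := mul_le_mul_of_nonneg_left (le_abs_self (ξ k - μ k)) p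
    have v := mul_le_mul_of_nonneg_left (neg_abs_le (ξ k - μ k)) q
    simp only [Pi.sub_apply]
    rw [r]
    linarith
  simp only [dotProduct_sub, sub_dotProduct] at e4 h3
  linarith
end

section
/- Let Ξ = {ξ ∈ ℝ^K : Uξ ≤ t} be compact, μ ∈ ℝ^K, σ ∈ ℝ^K with σ ≥ 0, a ∈ ℝ^K, b ∈ ℝ, ε ∈ (0,1). Suppose there exist α' ∈ ℝ, β' ∈ ℝ^K, κ' ∈ ℝ^K with κ' ≥ 0, λ' > 0, and π'₁, τ'₁, π'₂, τ'₂ ∈ ℝ^K, ψ'₁, ψ'₂ ∈ ℝ^W, all componentwise nonnegative, satisfying: α' + β'^T μ − κ'^T σ ≥ (1 − ε) λ'; α' + (π'₁ − τ'₁)^T μ + ψ'₁^T t ≤ λ'; β' + τ'₁ = π'₁ + U^T ψ'₁; π'₁ + τ'₁ = κ'; α' + (π'₂ − τ'₂)^T μ + ψ'₂^T t ≤ b; β' + a + τ'₂ = π'₂ + U^T ψ'₂; π'₂ + τ'₂ = κ'. Then every Borel probability measure P on ℝ^K with P(Ξ) = 1, ∫ ξ dP(ξ) = μ, and ∫ |ξ_k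 − μ_k| dP(ξ) ≤ σ_k for all k, satisfies P({ξ : a^T ξ ≤ b}) ≥ 1 − ε. -/
open Matrix MeasureTheory

/-- Weak duality on the support set. -/
lemma meanMAD_weak_duality {K W : ℕ}
    (U : Matrix (Fin W) (Fin K) ℝ) (t : Fin W → ℝ) (μ c κ p q ξ : Fin K → ℝ) (s : Fin W → ℝ)
    (hp : 0 ≤ p) (hq : 0 ≤ q) (hs : 0 ≤ s)
    (hc : c + q = p + U.transpose.mulVec s) (hk : p + q = κ)
    (hξ : U.mulVec ξ ≤ t) :
    c ⬝ᵥ ξ - ∑ k, κ k * |ξ k - μ k| ≤ (p - q) ⬝ᵥ μ + s ⬝ᵥ t := by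
  have hc' : c = (p - q) + U.transpose.mulVec s := by
    rw [sub_add_eq_add_sub, ← hc, add_sub_cancel_right]
  have h1 : (U.transpose.mulVec s) ⬝ᵥ ξ ≤ s ⬝ᵥ t := by
    rw [Matrix.mulVec_transpose, ← Matrix.dotProduct_mulVec]
    exact Finset.sum_le_sum fun i _ => mul_le_mul_of_nonneg_left (hξ i) (hs i)
  have h2 : (p - q) ⬝ᵥ ξ - (p - q) ⬝ᵥ μ ≤ ∑ k, κ k * |ξ k - μ k| := by
    rw [← dotProduct_sub]
    refine Finset.sum_le_sum fun k _ => ?_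
    have hkk : κ k = p k + q k := by rw [← hk]; rfl
    have := hp k
    have := hq k
    simp only [Pi.zero_apply, Pi.sub_apply] at *
    rw [hkk]
    nlinarith [le_abs_self (ξ k - μ k), neg_abs_le (ξ k - μ k)]
  rw [hc', add_dotProduct]
  linarith

/-- **Sufficiency direction of Proposition 3.** If the finite linear dual
system (with `λ' > 0`) is feasible, then every probability distribution
supported on the compact polyhedron `Ξ = {ξ : U ξ ≤ t}` with mean `μ` and
componentwise mean absolute deviation bounded by `σ` assigns probability at
least `1 − ε` to `{ξ : aᵀξ ≤ b}`. -/
theorem meanMAD_drcc_sufficiency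
    {K W : ℕ}
    (U : Matrix (Fin W) (Fin K) ℝ) (t : Fin W → ℝ)
    (hΞ : IsCompact {ξ : Fin K → ℝ | U.mulVec ξ ≤ t})
    (μ σ : Fin K → ℝ) (hσ : 0 ≤ σ)
    (a : Fin K → ℝ) (b : ℝ) (ε : ℝ) (hε : ε ∈ Set.Ioo (0 : ℝ) 1)
    (hdual : ∃ (α' : ℝ) (β' κ' : Fin K → ℝ) (lam' : ℝ)
        (π'₁ τ'₁ π'₂ τ'₂ : Fin K → ℝ) (ψ'₁ ψ'₂ : Fin W → ℝ),
          0 ≤ κ' ∧ 0 < lam' ∧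
          0 ≤ π'₁ ∧ 0 ≤ τ'₁ ∧ 0 ≤ π'₂ ∧ 0 ≤ τ'₂ ∧ 0 ≤ ψ'₁ ∧ 0 ≤ ψ'₂ ∧
          α' + β' ⬝ᵥ μ - κ' ⬝ᵥ σ ≥ (1 - ε) * lam' ∧
          α' + (π'₁ - τ'₁) ⬝ᵥ μ + ψ'₁ ⬝ᵥ t ≤ lam' ∧
          β' + τ'₁ = π'₁ + U.transpose.mulVec ψ'₁ ∧
          π'₁ + τ'₁ = κ' ∧
          α' + (π'₂ - τ'₂) ⬝ᵥ μ + ψ'₂ ⬝ᵥ t ≤ b ∧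
          β' + a + τ'₂ = π'₂ + U.transpose.mulVec ψ'₂ ∧
          π'₂ + τ'₂ = κ') :
    ∀ (P : Measure (Fin K → ℝ)) [IsProbabilityMeasure P],
      P {ξ : Fin K → ℝ | U.mulVec ξ ≤ t} = 1 →
      (∀ k, ∫ ξ, ξ k ∂P = μ k) →
      (∀ k, ∫ ξ, |ξ k - μ k| ∂P ≤ σ k) →
      (P {ξ : Fin K → ℝ | a ⬝ᵥ ξ ≤ b}).toReal ≥ 1 - ε := by
  obtain ⟨α, β, κ, l, p1, q1, p2, q2, s1, s2, hκ, hl, hp1, hq1, hp2, hq2, hs1, hs2,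
    h0, hA1, hA2, hA3, hB1, hB2, hB3⟩ := hdual
  intro P _ hP hmean hmad
  have hae : ∀ᵐ ξ ∂P, ξ ∈ {ξ : Fin K → ℝ | U.mulVec ξ ≤ t} :=
    (mem_ae_iff_prob_eq_one hΞ.measurableSet).2 hP
  have hint : ∀ f : (Fin K → ℝ) → ℝ, Continuous f → Integrable f P := by
    intro f hf
    have h := hf.continuousOn.integrableOn_compact (μ := P) hΞ
    rwa [IntegrableOn, Measure.restrict_eq_self_of_ae_mem hae] at h
  have hS : MeasurableSet {ξ : Fin K → ℝ | a ⬝ᵥ ξ ≤ b} := by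
    apply IsClosed.measurableSet
    refine isClosed_le ?_ continuous_const
    unfold dotProduct
    fun_prop
  have hle : ∫ ξ, (α + ∑ k, β k * ξ k - ∑ k, κ k * |ξ k - μ k|) ∂P
      ≤ ∫ ξ, Set.indicator {ξ : Fin K → ℝ | a ⬝ᵥ ξ ≤ b} (fun _ => l) ξ ∂P := by
    apply integral_mono_ae
    · exact hint _ (by fun_prop)
    · exact (integrable_const l).indicator hS
    · filter_upwards [hae] with ξ hξ
      have e1 := meanMAD_weak_duality U t μ β κ p1 q1 ξ s1 hp1 hq1 hs1 hA2 hA3 hξ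
      have e2 := meanMAD_weak_duality U t μ (β + a) κ p2 q2 ξ s2 hp2 hq2 hs2 hB2 hB3 hξ
      rw [add_dotProduct] at e2
      have e3 : β ⬝ᵥ ξ = ∑ k, β k * ξ k := rfl
      rw [e3] at e1 e2
      by_cases h : a ⬝ᵥ ξ ≤ b
      · rw [Set.indicator_of_mem (by exact h)]
        linarith
      · rw [Set.indicator_of_notMem (by exact h)]
        push Not at h
        linarith
  rw [integral_indicator_const l hS, integral_sub (hint _ (by fun_prop)) (hint _ (by fun_prop)),
    integral_add (hint _ (by fun_prop)) (hint _ (by fun_prop)),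
    integral_finsetSum _ (fun k _ => hint _ (by fun_prop)),
    integral_finsetSum _ (fun k _ => hint _ (by fun_prop))] at hle
  simp only [integral_const_mul, hmean, integral_const, probReal_univ, one_smul,
    smul_eq_mul] at hle
  have h3 : ∑ k, κ k * ∫ ξ, |ξ k - μ k| ∂P ≤ κ ⬝ᵥ σ :=
    Finset.sum_le_sum fun k _ => mul_le_mul_of_nonneg_left (hmad k) (hκ k)
  have h4 : β ⬝ᵥ μ = ∑ k, β k * μ k := rfl
  rw [h4] at h0
  have h5 : (1 - ε) * l ≤ P.real {ξ : Fin K → ℝ | a ⬝ᵥ ξ ≤ b} * l := by linarith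
  exact le_of_mul_le_mul_right h5 hl
end

section
/- Let Ξ = {ξ ∈ ℝ^K : Uξ ≤ t} be compact with nonempty interior, let μ lie in the interior of Ξ, let σ ∈ ℝ^K with σ_k > 0 for all k, let a ∈ ℝ^K, b ∈ ℝ, ε ∈ (0,1), and suppose there exists ξ in the interior of Ξ with a^T ξ > b. Then the distributionally robust chance constraint inf_{P ∈ P₁} P({ξ : a^T ξ ≤ b}) ≥ 1 − ε holds, where P₁ is the set of all Borel probability measures P on ℝ^K with P(Ξ) = 1, ∫ ξ dP(ξ) = μ, and ∫ |ξ_k − μ_k| dP(ξ) ≤ σ_k for all k, if and only if there exist α' ∈ ℝ, β' ∈ ℝ^K, κ' ∈ ℝ^K with κ' ≥ 0, λ' ≥ 0, and π'₁, τ'₁, π'₂, τ'₂ ∈ ℝ^K, ψ'₁, ψ'₂ ∈ ℝ^W, all componentwise nonnegative, satisfying: α' + β'^T μ − κ'^T σ ≥ (1 − ε) λ'; α' + (π'₁ − τ'₁)^T μ + ψ'₁^T t ≤ λ'; β' + τ'₁ = π'₁ + U^T ψ'₁; π'₁ + τ'₁ = κ'; α' + (π'₂ − τ'₂)^T μ +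 ψ'₂^T t ≤ b; β' + a + τ'₂ = π'₂ + U^T ψ'₂; π'₂ + τ'₂ = κ'. -/
open Matrix MeasureTheory

/-- Farkas lemma, algebraic proof following Bartl. -/
theorem farkas_finset {ι V : Type*} [AddCommGroup V] [Module ℝ V] (s : Finset ι) :
    ∀ (A : ι → V →ₗ[ℝ] ℝ) (g : V →ₗ[ℝ] ℝ),
      (∀ x, (∀ i ∈ s, A i x ≤ 0) → g x ≤ 0) →
      ∃ c : ι → ℝ, (∀ i, 0 ≤ c i) ∧ g = ∑ i ∈ s, c i • A i := by
  classical
  induction s using Finset.induction_on with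
  | empty =>
    intro A g h
    refine ⟨fun _ => 0, fun _ => le_rfl, ?_⟩
    ext x
    have h1 := h x (by simp)
    have h2 := h (-x) (by simp)
    simp only [map_neg] at h2
    simp
    linarith
  | insert j s hj ih =>
    intro A g h
    by_cases hc : ∀ x, (∀ i ∈ s, A i x ≤ 0) → g x ≤ 0
    · obtain ⟨c, hc0, hg⟩ := ih A g hc
      refine ⟨fun i => if i = j then 0 else c i, fun i => by dsimp only; split_ifs <;> simp [hc0], ?_⟩
      rw [Finset.sum_insert hj, hg]
      simp only [if_true, zero_smul, zero_add]
      refine Finset.sum_congr rfl fun i hi => ?_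
      rw [if_neg]
      rintro rfl
      exact hj hi
    · push Not at hc
      obtain ⟨y, hy, hgy⟩ := hc
      have hjy : 0 < A j y := by
        by_contra hn
        push Not at hn
        have := h y (by
          intro i hi
          rcases Finset.mem_insert.1 hi with rfl | hi
          · exact hn
          · exact hy i hi)
        linarith
      set r := A j y with hr
      obtain ⟨c, hc0, hg⟩ := ih (fun i => A i - (A i y / r) • A j) (g - (g y / r) • A j) (by
        intro x hx
        have key := h (x - (A j x / r) • y) (by
          intro i hi
          rcases Finset.mem_insert.1 hi with rfl | hi
          · simp only [map_sub, map_smul, smul_eq_mul, ← hr]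
            rw [div_mul_cancel₀ _ hjy.ne']
            simp
          · have := hx i hi
            simp only [LinearMap.sub_apply, LinearMap.smul_apply, smul_eq_mul] at this
            simp only [map_sub, map_smul, smul_eq_mul]
            have e : A j x / r * A i y = A i y / r * A j x := by ring
            rw [e]; exact this)
        simp only [map_sub, map_smul, smul_eq_mul] at key
        simp only [LinearMap.sub_apply, LinearMap.smul_apply, smul_eq_mul]
        have e : A j x / r * g y = g y / r * A j x := by ring
        rw [← e]; exact key)
      refine ⟨fun i => if i = j then (g y / r - ∑ i ∈ s, c i * (A i y / r)) else c i, ?_, ?_⟩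
      · intro i
        dsimp only
        split_ifs
        · have h1 : 0 ≤ g y / r := by positivity
          have h2 : ∑ i ∈ s, c i * (A i y / r) ≤ 0 := by
            refine Finset.sum_nonpos fun i hi => ?_
            exact mul_nonpos_of_nonneg_of_nonpos (hc0 i)
              (div_nonpos_of_nonpos_of_nonneg (hy i hi) hjy.le)
          linarith
        · exact hc0 i
      · rw [Finset.sum_insert hj]
        have e : ∑ i ∈ s, (if i = j then (g y / r - ∑ i ∈ s, c i * (A i y / r)) else c i) • A i
            = ∑ i ∈ s, c i • A i := by
          refine Finset.sum_congr rfl fun i hi => ?_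
          rw [if_neg]
          rintro rfl
          exact hj hi
        rw [e]
        ext x
        have hx := LinearMap.congr_fun hg x
        simp only [LinearMap.sub_apply, LinearMap.smul_apply, smul_eq_mul,
          LinearMap.sum_apply, mul_sub, Finset.sum_sub_distrib] at hx
        simp only [if_true, LinearMap.add_apply, LinearMap.smul_apply, smul_eq_mul,
          LinearMap.sum_apply, sub_mul, Finset.sum_mul]
        have e2 : ∑ i ∈ s, c i * (A i y / r * A j x) = ∑ i ∈ s, c i * (A i y / r) * A j x :=
          Finset.sum_congr rfl fun i _ => by ring
        linarith

/-- Two-point distribution with prescribed moments. -/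
theorem two_point {K W : ℕ} (U : Matrix (Fin W) (Fin K) ℝ) (t : Fin W → ℝ)
    (μ σ a : Fin K → ℝ) (b ε : ℝ)
    (H : ∀ (P : Measure (Fin K → ℝ)) [IsProbabilityMeasure P],
        P {ξ : Fin K → ℝ | U.mulVec ξ ≤ t} = 1 →
        (∀ k, ∫ ξ, ξ k ∂P = μ k) →
        (∀ k, ∫ ξ, |ξ k - μ k| ∂P ≤ σ k) →
        (P {ξ : Fin K → ℝ | a ⬝ᵥ ξ ≤ b}).toReal ≥ 1 - ε)
    (y₁ y₂ : ℝ) (d : Fin K → ℝ) (h₁ : 0 < y₁) (h₂ : 0 < y₂)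
    (hlt : y₁ < (1 - ε) * (y₁ + y₂))
    (hd : ∀ k, 2 * |d k| ≤ (y₁ + y₂) * σ k)
    (hU₁ : ∀ w, U.mulVec d w ≤ y₁ * (t w - U.mulVec μ w))
    (hU₂ : ∀ w, - U.mulVec d w ≤ y₂ * (t w - U.mulVec μ w))
    (hg : b * y₂ < - (a ⬝ᵥ d) + y₂ * (a ⬝ᵥ μ)) : False := by
  have hs : 0 < y₁ + y₂ := by positivity
  set p := y₁ / (y₁ + y₂) with hp
  set q := y₂ / (y₁ + y₂) with hq
  have hp0 : 0 ≤ p := by positivity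
  have hq0 : 0 ≤ q := by positivity
  have hpq : p + q = 1 := by rw [hp, hq]; field_simp
  set u : Fin K → ℝ := μ + (1 / y₁) • d with hu
  set v : Fin K → ℝ := μ - (1 / y₂) • d with hv
  have hΞc : MeasurableSet {ξ : Fin K → ℝ | U.mulVec ξ ≤ t} :=
    (isClosed_le (by fun_prop) continuous_const).measurableSet
  have hSc : MeasurableSet {ξ : Fin K → ℝ | a ⬝ᵥ ξ ≤ b} := by
    refine (isClosed_le ?_ continuous_const).measurableSet
    unfold dotProduct
    fun_prop
  have huΞ : U.mulVec u ≤ t := by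
    intro w
    have := hU₁ w
    rw [hu, Matrix.mulVec_add, Matrix.mulVec_smul]
    simp only [Pi.add_apply, Pi.smul_apply, smul_eq_mul]
    have : 1 / y₁ * (U *ᵥ d) w ≤ t w - (U *ᵥ μ) w := by
      rw [one_div_mul_eq_div, div_le_iff₀ h₁]; linarith
    linarith
  have hvΞ : U.mulVec v ≤ t := by
    intro w
    have := hU₂ w
    rw [hv, Matrix.mulVec_sub, Matrix.mulVec_smul]
    simp only [Pi.sub_apply, Pi.smul_apply, smul_eq_mul]
    have : - (1 / y₂ * (U *ᵥ d) w) ≤ t w - (U *ᵥ μ) w := by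
      rw [one_div_mul_eq_div, ← neg_div, div_le_iff₀ h₂]; linarith
    linarith
  have hvS : b < a ⬝ᵥ v := by
    rw [hv, dotProduct_sub, dotProduct_smul, smul_eq_mul]
    have : 1 / y₂ * (a ⬝ᵥ d) < a ⬝ᵥ μ - b := by
      rw [one_div_mul_eq_div, div_lt_iff₀ h₂]; linarith
    linarith
  let P : Measure (Fin K → ℝ) :=
    ENNReal.ofReal p • Measure.dirac u + ENNReal.ofReal q • Measure.dirac v
  have hP : P = ENNReal.ofReal p • Measure.dirac u + ENNReal.ofReal q • Measure.dirac v := rfl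
  have hone : ENNReal.ofReal p + ENNReal.ofReal q = 1 := by
    rw [← ENNReal.ofReal_add hp0 hq0, hpq, ENNReal.ofReal_one]
  have : IsProbabilityMeasure P := ⟨by simp [hP, hone]⟩
  have hintegral : ∀ f : (Fin K → ℝ) → ℝ, ∫ ξ, f ξ ∂P = p * f u + q * f v := by
    intro f
    rw [hP, integral_add_measure, integral_smul_measure, integral_smul_measure,
      integral_dirac, integral_dirac, ENNReal.toReal_ofReal hp0, ENNReal.toReal_ofReal hq0]
    · rfl
    · exact (integrable_dirac (by simp)).smul_measure (by simp)
    · exact (integrable_dirac (by simp)).smul_measure (by simp)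
  have key := H P ?_ ?_ ?_
  · rw [hP] at key
    simp only [Measure.add_apply, Measure.smul_apply, smul_eq_mul,
      Measure.dirac_apply' _ hSc] at key
    rw [Set.indicator_of_notMem (a := v) (by simpa using hvS)] at key
    rw [mul_zero, add_zero] at key
    have hle : (ENNReal.ofReal p * Set.indicator {ξ : Fin K → ℝ | a ⬝ᵥ ξ ≤ b} 1 u).toReal ≤ p := by
      rw [ENNReal.toReal_mul, ENNReal.toReal_ofReal hp0]
      by_cases hm : u ∈ {ξ : Fin K → ℝ | a ⬝ᵥ ξ ≤ b}
      · rw [Set.indicator_of_mem hm]; simp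
      · rw [Set.indicator_of_notMem hm]; simpa using hp0
    have : p < 1 - ε := by rw [hp, div_lt_iff₀ hs]; exact hlt
    linarith
  · rw [hP]
    simp only [Measure.add_apply, Measure.smul_apply, smul_eq_mul,
      Measure.dirac_apply' _ hΞc]
    rw [Set.indicator_of_mem (by exact huΞ), Set.indicator_of_mem (by exact hvΞ)]
    simpa using hone
  · intro k
    rw [hintegral]
    simp only [hu, hv, hp, hq, Pi.add_apply, Pi.sub_apply, Pi.smul_apply, smul_eq_mul]
    field_simp
    ring
  · intro k
    rw [hintegral]
    simp only [hu, hv, Pi.add_apply, Pi.sub_apply, Pi.smul_apply, smul_eq_mul,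
      add_sub_cancel_left, sub_sub_cancel_left, abs_neg, abs_mul]
    rw [abs_of_pos (one_div_pos.2 h₁), abs_of_pos (one_div_pos.2 h₂)]
    have : p * (1 / y₁ * |d k|) + q * (1 / y₂ * |d k|) = 2 * |d k| / (y₁ + y₂) := by
      rw [hp, hq]; field_simp; ring
    rw [this, div_le_iff₀ hs]
    linarith [hd k]

/-- Infeasibility of the primal moment certificate. -/
theorem primal_bound {K W : ℕ} (U : Matrix (Fin W) (Fin K) ℝ) (t : Fin W → ℝ)
    (μ σ a : Fin K → ℝ) (b ε : ℝ) (hε : ε ∈ Set.Ioo (0 : ℝ) 1)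
    (hμ : U.mulVec μ ≤ t)
    (hσ : ∀ k, 0 < σ k)
    (H : ∀ (P : Measure (Fin K → ℝ)) [IsProbabilityMeasure P],
        P {ξ : Fin K → ℝ | U.mulVec ξ ≤ t} = 1 →
        (∀ k, ∫ ξ, ξ k ∂P = μ k) →
        (∀ k, ∫ ξ, |ξ k - μ k| ∂P ≤ σ k) →
        (P {ξ : Fin K → ℝ | a ⬝ᵥ ξ ≤ b}).toReal ≥ 1 - ε)
    (y₁ y₂ : ℝ) (d : Fin K → ℝ) (h₁ : 0 ≤ y₁) (h₂ : 0 ≤ y₂)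
    (hle : y₁ ≤ (1 - ε) * (y₁ + y₂))
    (hd : ∀ k, 2 * |d k| ≤ (y₁ + y₂) * σ k)
    (hU₁ : ∀ w, U.mulVec d w ≤ y₁ * (t w - U.mulVec μ w))
    (hU₂ : ∀ w, - U.mulVec d w ≤ y₂ * (t w - U.mulVec μ w)) :
    - (a ⬝ᵥ d) + y₂ * (a ⬝ᵥ μ) ≤ b * y₂ := by
  obtain ⟨he0, he1⟩ := hε
  by_contra hg
  push Not at hg
  have hy2 : 0 < y₂ := by
    rcases h₂.lt_or_eq with h | h
    · exact h
    · exfalso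
      subst h
      have hy1 : y₁ = 0 := by nlinarith
      subst hy1
      have : d = 0 := by
        ext k
        have := hd k
        simp only [add_zero, zero_mul] at this
        have h3 : |d k| ≤ 0 := by linarith
        simpa using h3
      subst this
      simp at hg
  rcases h₁.lt_or_eq with hy1 | hy1
  · -- shift a little mass
    set c := a ⬝ᵥ d + y₁ * (a ⬝ᵥ μ) - b * y₁ with hc
    set G := - (a ⬝ᵥ d) + y₂ * (a ⬝ᵥ μ) - b * y₂ with hG
    have hG0 : 0 < G := by linarith
    obtain ⟨θ, hθ0, hθ1, hθ⟩ : ∃ θ : ℝ, 0 < θ ∧ θ < 1 ∧ 0 < G + θ * c := by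
      refine ⟨G / (G + |c| + 1), by positivity, ?_, ?_⟩
      · rw [div_lt_one (by positivity)]; linarith [abs_nonneg c]
      · have hD : 0 < G + |c| + 1 := by positivity
        have : G + G / (G + |c| + 1) * c = G * (G + |c| + 1 + c) / (G + |c| + 1) := by
          field_simp
        rw [this]
        have := neg_abs_le c
        have : 0 < G + |c| + 1 + c := by linarith
        positivity
    refine two_point U t μ σ a b ε H ((1 - θ) * y₁) (y₂ + θ * y₁) ((1 - θ) • d)
      (mul_pos (by linarith) hy1) (by positivity) ?_ ?_ ?_ ?_ ?_
    · have : (1 - θ) * y₁ + (y₂ + θ * y₁) = y₁ + y₂ := by ring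
      rw [this]
      nlinarith [mul_pos hθ0 hy1]
    · intro k
      have e : (1 - θ) * y₁ + (y₂ + θ * y₁) = y₁ + y₂ := by ring
      rw [e, Pi.smul_apply, smul_eq_mul, abs_mul, abs_of_pos (by linarith : 0 < 1 - θ)]
      nlinarith [hd k, abs_nonneg (d k), mul_nonneg hθ0.le (abs_nonneg (d k))]
    · intro w
      rw [Matrix.mulVec_smul, Pi.smul_apply, smul_eq_mul, mul_assoc]
      exact mul_le_mul_of_nonneg_left (hU₁ w) (by linarith)
    · intro w
      rw [Matrix.mulVec_smul, Pi.smul_apply, smul_eq_mul]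
      have := mul_le_mul_of_nonneg_left (hU₁ w) hθ0.le
      have := hU₂ w
      linarith
    · rw [dotProduct_smul, smul_eq_mul]
      have e : -((1 - θ) * (a ⬝ᵥ d)) + (y₂ + θ * y₁) * (a ⬝ᵥ μ) - b * (y₂ + θ * y₁)
          = G + θ * c := by rw [hc, hG]; ring
      linarith
  · subst hy1
    have hη : 0 < y₂ * (1 - ε) / 2 := by
      have : 0 < 1 - ε := by linarith
      positivity
    refine two_point U t μ σ a b ε H (y₂ * (1 - ε) / 2) y₂ d hη hy2 ?_ ?_ ?_ hU₂ hg
    · have : 0 < y₂ * (1 - ε) := by linarith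
      nlinarith
    · intro k
      have := hd k
      have := mul_pos hη (hσ k)
      linarith
    · intro w
      have := hU₁ w
      have h3 : 0 ≤ t w - (U *ᵥ μ) w := by linarith [hμ w]
      have := mul_nonneg hη.le h3
      linarith

theorem forward_dir {K W : ℕ} (U : Matrix (Fin W) (Fin K) ℝ) (t : Fin W → ℝ)
    (μ σ a : Fin K → ℝ) (b ε : ℝ)
    (H : ∀ (y₁ y₂ : ℝ) (d : Fin K → ℝ), 0 ≤ y₁ → 0 ≤ y₂ → y₁ ≤ (1 - ε) * (y₁ + y₂) →
      (∀ k, 2 * |d k| ≤ (y₁ + y₂) * σ k) →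
      (∀ w, U.mulVec d w ≤ y₁ * (t w - U.mulVec μ w)) →
      (∀ w, - U.mulVec d w ≤ y₂ * (t w - U.mulVec μ w)) →
      - (a ⬝ᵥ d) + y₂ * (a ⬝ᵥ μ) ≤ b * y₂) :
    ∃ (c₀ c₁ l : ℝ) (A B C D κ : Fin K → ℝ) (ψ₁ ψ₂ : Fin W → ℝ),
      0 ≤ c₀ ∧ 0 ≤ c₁ ∧ 0 ≤ l ∧ 0 ≤ A ∧ 0 ≤ B ∧ 0 ≤ C ∧ 0 ≤ D ∧ 0 ≤ κ ∧ 0 ≤ ψ₁ ∧ 0 ≤ ψ₂ ∧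
      (∀ (y₁ y₂ : ℝ) (d z₁ z₂ : Fin K → ℝ),
        - (a ⬝ᵥ d) + y₂ * (a ⬝ᵥ μ) - b * y₂ =
          c₀ * (-y₁) + c₁ * (-y₂) + l * (y₁ - (1 - ε) * (y₁ + y₂)) +
          A ⬝ᵥ (d - z₁) + B ⬝ᵥ (-d - z₁) + C ⬝ᵥ (-d - z₂) + D ⬝ᵥ (d - z₂) +
          κ ⬝ᵥ (z₁ + z₂ - (y₁ + y₂) • σ) +
          ψ₁ ⬝ᵥ (U.mulVec d - y₁ • (t - U.mulVec μ)) +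
          ψ₂ ⬝ᵥ (-U.mulVec d - y₂ • (t - U.mulVec μ))) := by
  let ι := (Unit ⊕ Unit ⊕ Unit) ⊕ (Fin K ⊕ Fin K ⊕ Fin K ⊕ Fin K ⊕ Fin K) ⊕ (Fin W ⊕ Fin W)
  let Y₁ : (ℝ × ℝ × (Fin K → ℝ) × (Fin K → ℝ) × (Fin K → ℝ)) →ₗ[ℝ] ℝ := LinearMap.fst ℝ _ _
  let Y₂ : (ℝ × ℝ × (Fin K → ℝ) × (Fin K → ℝ) × (Fin K → ℝ)) →ₗ[ℝ] ℝ := LinearMap.fst ℝ _ _ ∘ₗ LinearMap.snd ℝ _ _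
  let Dv : (ℝ × ℝ × (Fin K → ℝ) × (Fin K → ℝ) × (Fin K → ℝ)) →ₗ[ℝ] (Fin K → ℝ) :=
    LinearMap.fst ℝ _ _ ∘ₗ LinearMap.snd ℝ _ _ ∘ₗ LinearMap.snd ℝ _ _
  let Z₁ : (ℝ × ℝ × (Fin K → ℝ) × (Fin K → ℝ) × (Fin K → ℝ)) →ₗ[ℝ] (Fin K → ℝ) := LinearMap.fst ℝ _ _ ∘ₗ
    LinearMap.snd ℝ _ _ ∘ₗ LinearMap.snd ℝ _ _ ∘ₗ LinearMap.snd ℝ _ _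
  let Z₂ : (ℝ × ℝ × (Fin K → ℝ) × (Fin K → ℝ) × (Fin K → ℝ)) →ₗ[ℝ] (Fin K → ℝ) := LinearMap.snd ℝ _ _ ∘ₗ
    LinearMap.snd ℝ _ _ ∘ₗ LinearMap.snd ℝ _ _ ∘ₗ LinearMap.snd ℝ _ _
  let pr : Fin K → (Fin K → ℝ) →ₗ[ℝ] ℝ := fun k => LinearMap.proj k
  let UL : Fin W → (ℝ × ℝ × (Fin K → ℝ) × (Fin K → ℝ) × (Fin K → ℝ)) →ₗ[ℝ] ℝ := fun w => LinearMap.proj w ∘ₗ U.mulVecLin ∘ₗ Dv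
  let F : ι → (ℝ × ℝ × (Fin K → ℝ) × (Fin K → ℝ) × (Fin K → ℝ)) →ₗ[ℝ] ℝ :=
    Sum.elim (Sum.elim (fun _ => -Y₁) (Sum.elim (fun _ => -Y₂)
        (fun _ => Y₁ - (1 - ε) • (Y₁ + Y₂))))
      (Sum.elim
        (Sum.elim (fun k => pr k ∘ₗ (Dv - Z₁))
        (Sum.elim (fun k => pr k ∘ₗ (-Dv - Z₁))
        (Sum.elim (fun k => pr k ∘ₗ (-Dv - Z₂))
        (Sum.elim (fun k => pr k ∘ₗ (Dv - Z₂))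
          (fun k => pr k ∘ₗ (Z₁ + Z₂) - (σ k) • (Y₁ + Y₂))))))
        (Sum.elim (fun w => UL w - (t w - U.mulVec μ w) • Y₁)
          (fun w => - UL w - (t w - U.mulVec μ w) • Y₂)))
  let g : (ℝ × ℝ × (Fin K → ℝ) × (Fin K → ℝ) × (Fin K → ℝ)) →ₗ[ℝ] ℝ := - ((∑ k, a k • pr k) ∘ₗ Dv) + (a ⬝ᵥ μ) • Y₂ - b • Y₂
  obtain ⟨c, hc, hg⟩ := farkas_finset (Finset.univ : Finset ι) F g (by
    rintro ⟨y₁, y₂, d, z₁, z₂⟩ hx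
    have e1 := hx (Sum.inl (Sum.inl ())) (Finset.mem_univ _)
    have e2 := hx (Sum.inl (Sum.inr (Sum.inl ()))) (Finset.mem_univ _)
    have e3 := hx (Sum.inl (Sum.inr (Sum.inr ()))) (Finset.mem_univ _)
    have e4 := fun k => hx (Sum.inr (Sum.inl (Sum.inl k))) (Finset.mem_univ _)
    have e5 := fun k => hx (Sum.inr (Sum.inl (Sum.inr (Sum.inl k)))) (Finset.mem_univ _)
    have e6 := fun k => hx (Sum.inr (Sum.inl (Sum.inr (Sum.inr (Sum.inl k))))) (Finset.mem_univ _)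
    have e7 := fun k =>
      hx (Sum.inr (Sum.inl (Sum.inr (Sum.inr (Sum.inr (Sum.inl k)))))) (Finset.mem_univ _)
    have e8 := fun k =>
      hx (Sum.inr (Sum.inl (Sum.inr (Sum.inr (Sum.inr (Sum.inr k)))))) (Finset.mem_univ _)
    have e9 := fun w => hx (Sum.inr (Sum.inr (Sum.inl w))) (Finset.mem_univ _)
    have e10 := fun w => hx (Sum.inr (Sum.inr (Sum.inr w))) (Finset.mem_univ _)
    simp [F, Y₁, Y₂, Dv, Z₁, Z₂, pr, UL, -tsub_le_iff_right] at e1 e2 e3 e4 e5 e6 e7 e8 e9 e10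
    have := H y₁ y₂ d e1 e2 (by linarith) (fun k => by
        have h3 : |d k| ≤ z₁ k := abs_le.2 ⟨by linarith [e5 k], by linarith [e4 k]⟩
        have h4 : |d k| ≤ z₂ k := abs_le.2 ⟨by linarith [e6 k], by linarith [e7 k]⟩
        linarith [e8 k])
      (fun w => by linarith [e9 w]) (fun w => by linarith [e10 w])
    simp [g, Y₁, Y₂, Dv, pr, -tsub_le_iff_right]
    simp only [dotProduct] at this ⊢
    linarith)
  refine ⟨c (Sum.inl (Sum.inl ())), c (Sum.inl (Sum.inr (Sum.inl ()))),
    c (Sum.inl (Sum.inr (Sum.inr ()))),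
    fun k => c (Sum.inr (Sum.inl (Sum.inl k))),
    fun k => c (Sum.inr (Sum.inl (Sum.inr (Sum.inl k)))),
    fun k => c (Sum.inr (Sum.inl (Sum.inr (Sum.inr (Sum.inl k))))),
    fun k => c (Sum.inr (Sum.inl (Sum.inr (Sum.inr (Sum.inr (Sum.inl k)))))),
    fun k => c (Sum.inr (Sum.inl (Sum.inr (Sum.inr (Sum.inr (Sum.inr k)))))),
    fun w => c (Sum.inr (Sum.inr (Sum.inl w))),
    fun w => c (Sum.inr (Sum.inr (Sum.inr w))),
    hc _, hc _, hc _, fun _ => hc _, fun _ => hc _, fun _ => hc _, fun _ => hc _,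
    fun _ => hc _, fun _ => hc _, fun _ => hc _, ?_⟩
  intro y₁ y₂ d z₁ z₂
  have e := LinearMap.congr_fun hg (y₁, y₂, d, z₁, z₂)
  simp only [ι, Fintype.sum_sum_type, LinearMap.sum_apply, LinearMap.add_apply] at e
  simp [F, g, Y₁, Y₂, Dv, Z₁, Z₂, pr, UL] at e
  simp only [dotProduct, Pi.sub_apply, Pi.add_apply, Pi.neg_apply, Pi.smul_apply, smul_eq_mul]
    at e ⊢
  simp only [mul_comm (σ _), mul_comm (t _ - _)] at e
  simp only [add_mul y₁ y₂ (σ _)]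
  linarith

theorem dual_pointwise {K W : ℕ} (U : Matrix (Fin W) (Fin K) ℝ) (t : Fin W → ℝ)
    (μ β κ p τ : Fin K → ℝ) (ψ : Fin W → ℝ) (α r : ℝ)
    (hp : 0 ≤ p) (hτ : 0 ≤ τ) (hψ : 0 ≤ ψ)
    (h1 : α + (p - τ) ⬝ᵥ μ + ψ ⬝ᵥ t ≤ r)
    (h2 : β + τ = p + U.transpose.mulVec ψ) (h3 : p + τ = κ)
    (ξ : Fin K → ℝ) (hξ : U.mulVec ξ ≤ t) :
    α + β ⬝ᵥ ξ - ∑ k, κ k * |ξ k - μ k| ≤ r := by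
  have e : β = (p - τ) + U.transpose.mulVec ψ := by
    rw [eq_sub_of_add_eq h2]; abel
  have e1 : U.transpose.mulVec ψ ⬝ᵥ ξ = ψ ⬝ᵥ U.mulVec ξ := by
    rw [Matrix.mulVec_transpose, Matrix.dotProduct_mulVec]
  have e2 : ψ ⬝ᵥ U.mulVec ξ ≤ ψ ⬝ᵥ t := dotProduct_le_dotProduct_of_nonneg_left hξ hψ
  have e3 : (p - τ) ⬝ᵥ ξ - (p - τ) ⬝ᵥ μ ≤ ∑ k, κ k * |ξ k - μ k| := by
    rw [← dotProduct_sub]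
    refine Finset.sum_le_sum fun k _ => ?_
    rw [← h3]
    simp only [Pi.sub_apply, Pi.add_apply]
    have := hp k
    have := hτ k
    simp only [Pi.zero_apply] at *
    nlinarith [mul_le_mul_of_nonneg_left (le_abs_self (ξ k - μ k)) (hp k),
      mul_le_mul_of_nonneg_left (neg_abs_le (ξ k - μ k)) (hτ k)]
  rw [e, add_dotProduct, e1]
  linarith


/-- **Proposition 3 (constraint-level equivalence).** Under the Slater
conditions (compact full-dimensional polyhedral support `Ξ`, mean `μ` in the
interior of `Ξ`, strictly positive MAD bounds `σ`, and a point of `interior Ξ`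
violating `aᵀξ ≤ b`), the distributionally robust chance constraint
`inf_{P ∈ P₁} P(aᵀξ ≤ b) ≥ 1 − ε` over the mean-MAD ambiguity set `P₁` holds
iff the finite linear dual system is feasible. -/
theorem meanMAD_drcc_equivalence
    {K W : ℕ}
    (U : Matrix (Fin W) (Fin K) ℝ) (t : Fin W → ℝ)
    (hΞ : IsCompact {ξ : Fin K → ℝ | U.mulVec ξ ≤ t})
    (hint : (interior {ξ : Fin K → ℝ | U.mulVec ξ ≤ t}).Nonempty)
    (μ σ : Fin K → ℝ)
    (hμ : μ ∈ interior {ξ : Fin K → ℝ | U.mulVec ξ ≤ t})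
    (hσ : ∀ k, 0 < σ k)
    (a : Fin K → ℝ) (b : ℝ) (ε : ℝ) (hε : ε ∈ Set.Ioo (0 : ℝ) 1)
    (hslater : ∃ ξ ∈ interior {ξ : Fin K → ℝ | U.mulVec ξ ≤ t}, a ⬝ᵥ ξ > b) :
    (∀ (P : Measure (Fin K → ℝ)) [IsProbabilityMeasure P],
        P {ξ : Fin K → ℝ | U.mulVec ξ ≤ t} = 1 →
        (∀ k, ∫ ξ, ξ k ∂P = μ k) →
        (∀ k, ∫ ξ, |ξ k - μ k| ∂P ≤ σ k) →
        (P {ξ : Fin K → ℝ | a ⬝ᵥ ξ ≤ b}).toReal ≥ 1 - ε)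
      ↔ ∃ (α' : ℝ) (β' κ' : Fin K → ℝ) (lam' : ℝ)
          (π'₁ τ'₁ π'₂ τ'₂ : Fin K → ℝ) (ψ'₁ ψ'₂ : Fin W → ℝ),
            0 ≤ κ' ∧ 0 ≤ lam' ∧
            0 ≤ π'₁ ∧ 0 ≤ τ'₁ ∧ 0 ≤ π'₂ ∧ 0 ≤ τ'₂ ∧ 0 ≤ ψ'₁ ∧ 0 ≤ ψ'₂ ∧
            α' + β' ⬝ᵥ μ - κ' ⬝ᵥ σ ≥ (1 - ε) * lam' ∧
            α' + (π'₁ - τ'₁) ⬝ᵥ μ + ψ'₁ ⬝ᵥ t ≤ lam' ∧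
            β' + τ'₁ = π'₁ + U.transpose.mulVec ψ'₁ ∧
            π'₁ + τ'₁ = κ' ∧
            α' + (π'₂ - τ'₂) ⬝ᵥ μ + ψ'₂ ⬝ᵥ t ≤ b ∧
            β' + a + τ'₂ = π'₂ + U.transpose.mulVec ψ'₂ ∧
            π'₂ + τ'₂ = κ' := by
  have hμΞ : U.mulVec μ ≤ t := interior_subset hμ
  constructor
  · intro H
    obtain ⟨c₀, c₁, l, A, B, C, D, κ, ψ₁, ψ₂, hc₀, hc₁, hl, hA, hB, hC, hD, hκ, hψ₁, hψ₂, E⟩ :=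
      forward_dir U t μ σ a b ε fun y₁ y₂ d h₁ h₂ h₃ h₄ h₅ h₆ =>
        primal_bound U t μ σ a b ε hε hμΞ hσ H y₁ y₂ d h₁ h₂ h₃ h₄ h₅ h₆
    have E1 := E 1 0 0 0 0
    have E2 := E 0 1 0 0 0
    have E3 : A + B = κ := by
      ext k
      have := E 0 0 0 (Pi.single k 1) 0
      simp at this
      simp only [Pi.add_apply]; linarith
    have E4 : C + D = κ := by
      ext k
      have := E 0 0 0 0 (Pi.single k 1)
      simp at this
      simp only [Pi.add_apply]; linarith
    have eT : ∀ (ψ : Fin W → ℝ) (x : Fin K → ℝ),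
        ψ ⬝ᵥ U.mulVec x = U.transpose.mulVec ψ ⬝ᵥ x := by
      intro ψ x
      rw [Matrix.mulVec_transpose, Matrix.dotProduct_mulVec]
    have E5 : A - B + U.transpose.mulVec ψ₁ + a + D = C + U.transpose.mulVec ψ₂ := by
      ext k
      have := E 0 0 (Pi.single k 1) 0 0
      simp only [dotProduct_sub, dotProduct_neg, eT, dotProduct_single_one] at this
      simp at this
      simp only [Pi.add_apply, Pi.sub_apply]; linarith
    simp only [dotProduct_sub, dotProduct_neg, dotProduct_smul, eT] at E1 E2
    simp at E1 E2
    have E6 := congrArg (fun x => x ⬝ᵥ μ) E5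
    simp only [add_dotProduct, sub_dotProduct] at E6
    refine ⟨(1 - ε) * l + κ ⬝ᵥ σ - (A - B + U.transpose.mulVec ψ₁) ⬝ᵥ μ,
      A - B + U.transpose.mulVec ψ₁, κ, l, A, B, C, D, ψ₁, ψ₂,
      hκ, hl, hA, hB, hC, hD, hψ₁, hψ₂, ?_, ?_, ?_, E3, ?_, E5, E4⟩
    · linarith
    · simp only [add_dotProduct, sub_dotProduct, Matrix.mulVec_transpose] at *
      linarith
    · abel
    · simp only [add_dotProduct, sub_dotProduct, Matrix.mulVec_transpose] at *
      linarith
  · rintro ⟨α, β, κ, l, p₁, τ₁, p₂, τ₂, ψ₁, ψ₂, hκ, hl, hp₁, hτ₁, hp₂, hτ₂, hψ₁, hψ₂,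
      c1, c2, c3, c4, c5, c6, c7⟩ P _ hPΞ hPμ hPσ
    obtain ⟨he0, he1⟩ := hε
    have F1 : ∀ ξ : Fin K → ℝ, U.mulVec ξ ≤ t →
        α + β ⬝ᵥ ξ - ∑ k, κ k * |ξ k - μ k| ≤ l := fun ξ hξ =>
      dual_pointwise U t μ β κ p₁ τ₁ ψ₁ α l hp₁ hτ₁ hψ₁ c2 c3 c4 ξ hξ
    have F2 : ∀ ξ : Fin K → ℝ, U.mulVec ξ ≤ t →
        α + β ⬝ᵥ ξ - ∑ k, κ k * |ξ k - μ k| ≤ b - a ⬝ᵥ ξ := fun ξ hξ => by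
      have := dual_pointwise U t μ (β + a) κ p₂ τ₂ ψ₂ α b hp₂ hτ₂ hψ₂ c5 c6 c7 ξ hξ
      rw [add_dotProduct] at this
      linarith
    have hlpos : 0 < l := by
      rcases hl.lt_or_eq with h | h
      · exact h
      exfalso
      subst h
      have h1 := F1 μ hμΞ
      simp only [sub_self, abs_zero, mul_zero, Finset.sum_const_zero, sub_zero] at h1 c1
      have h0 : 0 ≤ κ ⬝ᵥ σ := dotProduct_nonneg_of_nonneg hκ fun k => (hσ k).le
      have h2 : κ ⬝ᵥ σ = 0 := by linarith
      have h3 : ∀ k, κ k = 0 := by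
        intro k
        have := (Finset.sum_eq_zero_iff_of_nonneg
          (fun i _ => mul_nonneg (hκ i) (hσ i).le)).1 h2 k (Finset.mem_univ _)
        rcases mul_eq_zero.1 this with h | h
        · exact h
        · exact absurd h (hσ k).ne'
      simp only [h3, zero_mul, Finset.sum_const_zero, sub_zero] at F1 F2
      obtain ⟨x, hx, hax⟩ := hslater
      have h4 := F2 x (interior_subset hx)
      have hcont : Filter.Tendsto (fun δ : ℝ => μ + δ • (μ - x)) (nhdsWithin 0 (Set.Ioi 0))
          (nhds μ) := by
        have : Continuous (fun δ : ℝ => μ + δ • (μ - x)) := by fun_prop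
        have h := this.tendsto 0
        simp only [zero_smul, add_zero] at h
        exact h.mono_left nhdsWithin_le_nhds
      have hev := hcont.eventually (mem_interior_iff_mem_nhds.1 hμ)
      obtain ⟨δ, hδ, hδ0⟩ := (hev.and self_mem_nhdsWithin).exists
      have h5 := F1 _ hδ
      have hδ0' : 0 < δ := hδ0
      rw [dotProduct_add, dotProduct_smul, dotProduct_sub, smul_eq_mul] at h5
      have : 0 < δ * (β ⬝ᵥ μ - β ⬝ᵥ x) := mul_pos hδ0' (by linarith)
      linarith
    set S : Set (Fin K → ℝ) := {ξ | a ⬝ᵥ ξ ≤ b} with hS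
    have hSm : MeasurableSet S := by
      refine (isClosed_le ?_ continuous_const).measurableSet
      unfold dotProduct
      fun_prop
    have hae : ∀ᵐ ξ ∂P, ξ ∈ {ξ : Fin K → ℝ | U.mulVec ξ ≤ t} :=
      (mem_ae_iff_prob_eq_one hΞ.measurableSet).2 hPΞ
    have hcontint : ∀ f : (Fin K → ℝ) → ℝ, Continuous f → Integrable f P := by
      intro f hf
      obtain ⟨M, hM⟩ := hΞ.exists_bound_of_continuousOn hf.continuousOn
      exact Integrable.of_bound hf.aestronglyMeasurable M (hae.mono fun ξ hξ => hM ξ hξ)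
    have hb : ∫ ξ, β ⬝ᵥ ξ ∂P = β ⬝ᵥ μ := by
      simp only [dotProduct]
      rw [integral_finsetSum _ fun k _ => hcontint _ (by fun_prop)]
      simp only [integral_const_mul, hPμ]
    have hk : ∫ ξ, ∑ k, κ k * |ξ k - μ k| ∂P ≤ κ ⬝ᵥ σ := by
      rw [integral_finsetSum _ fun k _ => hcontint _ (by fun_prop)]
      simp only [integral_const_mul]
      exact Finset.sum_le_sum fun k _ => mul_le_mul_of_nonneg_left (hPσ k) (hκ k)
    have ib : Integrable (fun ξ : Fin K → ℝ => β ⬝ᵥ ξ) P :=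
      hcontint _ (by unfold dotProduct; fun_prop)
    have ik : Integrable (fun ξ : Fin K → ℝ => ∑ k, κ k * |ξ k - μ k|) P :=
      hcontint _ (by fun_prop)
    have iab : Integrable (fun ξ : Fin K → ℝ => α + β ⬝ᵥ ξ) P :=
      (integrable_const α).add ib
    have hh : ∫ ξ, (α + β ⬝ᵥ ξ - ∑ k, κ k * |ξ k - μ k|) ∂P
        = α + β ⬝ᵥ μ - ∫ ξ, ∑ k, κ k * |ξ k - μ k| ∂P := by
      rw [integral_sub iab ik, integral_add (integrable_const α) ib, hb]
      simp
    have hle : ∫ ξ, (α + β ⬝ᵥ ξ - ∑ k, κ k * |ξ k - μ k|) ∂P ≤ ∫ ξ, S.indicator (fun _ => l) ξ ∂P := by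
      refine integral_mono_ae (iab.sub ik) ((integrable_const l).indicator hSm) ?_
      filter_upwards [hae] with ξ hξ
      by_cases hm : ξ ∈ S
      · rw [Set.indicator_of_mem hm]; exact F1 ξ hξ
      · rw [Set.indicator_of_notMem hm]
        have h1 := F2 ξ hξ
        have h2 : b < a ⬝ᵥ ξ := by simpa [hS] using hm
        linarith
    rw [integral_indicator_const _ hSm, smul_eq_mul, measureReal_def] at hle
    have : (1 - ε) * l ≤ (P S).toReal * l := by linarith
    exact le_of_mul_le_mul_right this hlpos
end
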